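/- Let n, k, ℓ be positive integers with ℓ ≤ k. Suppose Π : {0,1}^{n×k} → ℝ is a finite linear combination Π = Σ_j a_j χ_j of ℓ-cylinder intersections χ_j with real coefficients a_j, such that |Π(X)| ≤ 1 and |GIP_{n,k}(X) − Π(X)| ≤ 1/3 for every X ∈ {0,1}^{n×k}. Then Σ_j |a_j| ≥ (1/3) · (1 − 1/(2^{ℓ−1} · C(k,≤ℓ)))^{−n}, where C(k,≤ℓ) = Σ_{i=0}^{ℓ} C(k,i). -/

import Mathlib

open Finset

/-- `χ` is an `S`-cylinder intersection on `{0,1}^{n×k}`: a product over `j ∈ S` of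
`{0,1}`-valued functions `φ j`, where `φ j` does not depend on the `j`-th column. -/
def IsCylinderOn (n k : ℕ) (S : Finset (Fin k))
    (χ : (Fin n → Fin k → Bool) → ℝ) : Prop :=
  ∃ φ : Fin k → ((Fin n → Fin k → Bool) → ℝ),
    (∀ j ∈ S, ∀ X, φ j X = 0 ∨ φ j X = 1) ∧
    (∀ j ∈ S, ∀ X Y, (∀ i, ∀ j', j' ≠ j → X i j' = Y i j') → φ j X = φ j Y) ∧
    (∀ X, χ X = ∏ j ∈ S, φ j X)

/-- Generalized inner product: `GIP_{n,k}(X) = ⊕_{i=1}^n ∧_{j=1}^k X_{i,j}`, i.e.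
the parity of the number of all-ones rows of `X`. -/
def GIP (n k : ℕ) (X : Fin n → Fin k → Bool) : Bool :=
  decide ((Finset.univ.filter (fun i : Fin n => ∀ j, X i j = true)).card % 2 = 1)

/-- Constants in the Babai–Nisan–Szegedy bound. -/
noncomputable def bnsC : ℕ → ℝ
  | 0 => 0
  | (m + 1) => Real.sqrt ((1 + bnsC m) / 2)

theorem bnsC_nonneg (m : ℕ) : 0 ≤ bnsC m := by
  cases m with
  | zero => simp [bnsC]
  | succ m => exact Real.sqrt_nonneg _

theorem bnsC_sq (m : ℕ) : bnsC (m + 1) ^ 2 = (1 + bnsC m) / 2 := by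
  have := bnsC_nonneg m
  rw [bnsC, Real.sq_sqrt (by linarith)]

theorem bnsC_le (m : ℕ) : bnsC (m + 1) ≤ 1 - 7 / 24 * (1 / 4) ^ m := by
  induction m with
  | zero =>
    have h := bnsC_sq 0
    apply le_of_sq_le_sq _ (by norm_num)
    rw [h, bnsC]
    norm_num
  | succ m ih =>
    have h := bnsC_sq (m + 1)
    have h1 : ((1 / 4 : ℝ)) ^ m ≤ 1 := pow_le_one₀ (by norm_num) (by norm_num)
    have h2 : 0 < ((1 / 4 : ℝ)) ^ m := by positivity
    apply le_of_sq_le_sq _ (by rw [pow_succ]; linarith)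
    rw [h, pow_succ (1 / 4 : ℝ) m]
    nlinarith

/-- Partial sign with active rows `A`. -/
def sgA {n m : ℕ} (A : Finset (Fin n)) (U : Fin m → Fin n → Bool) : ℝ :=
  ∏ i, if i ∈ A ∧ ∀ a, U a i = true then (-1 : ℝ) else 1

theorem abs_sgA {n m : ℕ} (A : Finset (Fin n)) (U : Fin m → Fin n → Bool) : |sgA A U| = 1 := by
  unfold sgA
  rw [Finset.abs_prod]
  apply Finset.prod_eq_one
  intro i _
  split_ifs <;> simp

theorem sgA_mul {n m : ℕ} (A : Finset (Fin n)) (z z' : Fin n → Bool) (Y : Fin m → Fin n → Bool) :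
    sgA A (Fin.cons z Y : Fin (m + 1) → Fin n → Bool) *
      sgA A (Fin.cons z' Y : Fin (m + 1) → Fin n → Bool) =
    sgA (A.filter (fun i => z i ≠ z' i)) Y := by
  unfold sgA
  rw [← Finset.prod_mul_distrib]
  apply Finset.prod_congr rfl
  intro i _
  simp only [Fin.forall_fin_succ, Fin.cons_zero, Fin.cons_succ, Finset.mem_filter]
  by_cases hA : i ∈ A <;> by_cases hY : ∀ a, Y a i = true <;> cases z i <;> cases z' i <;>
    simp [hA, hY]

theorem sum_pi_prod {n : ℕ} (g : Fin n → Bool → ℝ) :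
    ∑ z : Fin n → Bool, ∏ i, g i (z i) = ∏ i, ∑ b, g i b := by
  rw [Finset.prod_univ_sum, Fintype.piFinset_univ]

theorem pow_card_eq {n : ℕ} (c : ℝ) (A : Finset (Fin n)) :
    c ^ A.card = ∏ i, if i ∈ A then c else 1 := by
  rw [Finset.prod_ite_mem]
  simp

theorem sum_pow_diff {n : ℕ} (c : ℝ) (A : Finset (Fin n)) (z : Fin n → Bool) :
    ∑ z' : Fin n → Bool, c ^ (A.filter (fun i => z i ≠ z' i)).card =
      2 ^ n * ((1 + c) / 2) ^ A.card := by
  have h := sum_pi_prod (n := n) (fun i b => if i ∈ A ∧ z i ≠ b then c else 1)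
  have h2 : ∀ z' : Fin n → Bool, c ^ (A.filter (fun i => z i ≠ z' i)).card =
      ∏ i, if i ∈ A ∧ z i ≠ z' i then c else 1 := by
    intro z'
    rw [pow_card_eq]
    simp only [Finset.mem_filter]
  simp only [h2]
  rw [h, pow_card_eq]
  have h3 : (2 : ℝ) ^ n = ∏ _i : Fin n, 2 := by simp
  rw [h3, ← Finset.prod_mul_distrib]
  apply Finset.prod_congr rfl
  intro i _
  by_cases hA : i ∈ A <;> cases z i <;> simp [hA] <;> ring

theorem bns_base (n : ℕ) (A : Finset (Fin n))
    (f : Fin 1 → (Fin 1 → Fin n → Bool) → ℝ)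
    (hf : ∀ a U, |f a U| ≤ 1)
    (hd : ∀ a U V, (∀ b, b ≠ a → U b = V b) → f a U = f a V) :
    |∑ U, sgA A U * ∏ a, f a U| ≤ (2 ^ n) ^ (0 + 1) * bnsC 0 ^ A.card := by
  have hc : ∀ U, f 0 U = f 0 (fun _ _ => true) := by
    intro U
    apply hd
    intro b hb
    exact absurd (Subsingleton.elim b 0) hb
  simp only [Finset.univ_unique, Fin.default_eq_zero, Finset.prod_singleton]
  simp only [hc]
  rw [← Finset.sum_mul, abs_mul]
  have hs : ∑ U : Fin 1 → Fin n → Bool, sgA A U = 2 ^ n * (0 : ℝ) ^ A.card := by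
    rw [← (Equiv.funUnique (Fin 1) (Fin n → Bool)).symm.sum_comp]
    have h := sum_pi_prod (n := n) (fun i b => if i ∈ A ∧ b = true then (-1 : ℝ) else 1)
    have h1 : ∀ z : Fin n → Bool, sgA A ((Equiv.funUnique (Fin 1) (Fin n → Bool)).symm z) =
        ∏ i, if i ∈ A ∧ z i = true then (-1 : ℝ) else 1 := by
      intro z
      unfold sgA
      apply Finset.prod_congr rfl
      intro i _
      simp
    simp only [h1]
    rw [h, pow_card_eq]
    have h3 : (2 : ℝ) ^ n = ∏ _i : Fin n, 2 := by simp
    rw [h3, ← Finset.prod_mul_distrib]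
    apply Finset.prod_congr rfl
    intro i _
    by_cases hA : i ∈ A <;> simp [hA]
  rw [hs]
  have h4 : (0 : ℝ) ≤ 2 ^ n * (0 : ℝ) ^ A.card := by positivity
  rw [abs_of_nonneg h4]
  simp only [bnsC, zero_add, pow_one]
  nlinarith [hf 0 (fun _ _ => true)]

theorem bns (n : ℕ) : ∀ (m : ℕ) (A : Finset (Fin n))
    (f : Fin (m + 1) → (Fin (m + 1) → Fin n → Bool) → ℝ),
    (∀ a U, |f a U| ≤ 1) →
    (∀ a U V, (∀ b, b ≠ a → U b = V b) → f a U = f a V) →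
    |∑ U, sgA A U * ∏ a, f a U| ≤ (2 ^ n) ^ (m + 1) * bnsC m ^ A.card := by
  intro m
  induction m with
  | zero =>
    exact bns_base n
  | succ m ih =>
    intro A f hf hd
    set N : ℝ := 2 ^ n with hN
    have hNpos : 0 < N := by positivity
    have hcard : (Fintype.card (Fin (m + 1) → Fin n → Bool) : ℝ) = N ^ (m + 1) := by
      simp [hN]
    -- the sum over the first column
    let G : (Fin n → Bool) → (Fin (m + 1) → Fin n → Bool) → ℝ := fun z Y =>
      sgA A (Fin.cons z Y : Fin (m + 2) → Fin n → Bool) *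
        ∏ a : Fin (m + 1), f a.succ (Fin.cons z Y)
    let z0 : Fin n → Bool := fun _ => true
    have hT : ∑ U, sgA A U * ∏ a, f a U =
        ∑ Y, f 0 (Fin.cons z0 Y) * ∑ z, G z Y := by
      rw [← (Fin.consEquiv (fun _ : Fin (m + 2) => Fin n → Bool)).sum_comp,
        Fintype.sum_prod_type, Finset.sum_comm]
      apply Finset.sum_congr rfl
      intro Y _
      rw [Finset.mul_sum]
      apply Finset.sum_congr rfl
      intro z _
      simp only [Fin.consEquiv, Equiv.coe_fn_mk, G]
      rw [Fin.prod_univ_succ]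
      have : f 0 (Fin.cons z Y) = f 0 (Fin.cons z0 Y) := by
        apply hd
        intro b hb
        obtain ⟨b', rfl⟩ := Fin.exists_succ_eq.mpr hb
        simp
      rw [this]
      ring
    have hpair : ∀ z z', ∑ Y, G z Y * G z' Y ≤
        N ^ (m + 1) * bnsC m ^ (A.filter (fun i => z i ≠ z' i)).card := by
      intro z z'
      have := ih (A.filter (fun i => z i ≠ z' i))
        (fun a Y => f a.succ (Fin.cons z Y) * f a.succ (Fin.cons z' Y)) ?_ ?_
      · refine le_trans (le_of_eq ?_) ((le_abs_self _).trans this)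
        apply Finset.sum_congr rfl
        intro Y _
        rw [← sgA_mul, Finset.prod_mul_distrib]
        simp only [G]
        ring
      · intro a U
        rw [abs_mul]
        exact mul_le_one₀ (hf _ _) (abs_nonneg _) (hf _ _)
      · intro a U V h
        have key : ∀ w : Fin n → Bool, f a.succ (Fin.cons w U) = f a.succ (Fin.cons w V) := by
          intro w
          apply hd
          intro b hb
          induction b using Fin.cases with
          | zero => simp
          | succ b =>
            simp only [Fin.cons_succ]
            exact h b (fun e => hb (by rw [e]))
        simp only [key]
    have hsq : (∑ U, sgA A U * ∏ a, f a U) ^ 2 ≤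
        (N ^ (m + 2) * bnsC (m + 1) ^ A.card) ^ 2 := by
      calc (∑ U, sgA A U * ∏ a, f a U) ^ 2
          = (∑ Y, f 0 (Fin.cons z0 Y) * ∑ z, G z Y) ^ 2 := by rw [hT]
        _ ≤ (∑ Y : (Fin (m + 1) → Fin n → Bool), f 0 (Fin.cons z0 Y) ^ 2) *
              ∑ Y, (∑ z, G z Y) ^ 2 := Finset.sum_mul_sq_le_sq_mul_sq _ _ _
        _ ≤ N ^ (m + 1) * ∑ Y, (∑ z, G z Y) ^ 2 := by
            apply mul_le_mul_of_nonneg_right _ (Finset.sum_nonneg fun _ _ => sq_nonneg _)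
            rw [← hcard]
            calc _ ≤ ∑ Y : (Fin (m + 1) → Fin n → Bool), (1 : ℝ) := by
                  apply Finset.sum_le_sum
                  intro Y _
                  exact (sq_le_one_iff_abs_le_one _).mpr (hf _ _)
              _ = _ := by simp
        _ = N ^ (m + 1) * ∑ z, ∑ z', ∑ Y, G z Y * G z' Y := by
            congr 1
            have : ∀ Y, (∑ z, G z Y) ^ 2 = ∑ z, ∑ z', G z Y * G z' Y := by
              intro Y
              rw [sq, Finset.sum_mul_sum]
            simp only [this]
            rw [Finset.sum_comm]
            apply Finset.sum_congr rfl
            intro z _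
            rw [Finset.sum_comm]
        _ ≤ N ^ (m + 1) * ∑ z : Fin n → Bool, ∑ z' : Fin n → Bool, N ^ (m + 1) *
              bnsC m ^ (A.filter (fun i => z i ≠ z' i)).card := by
            apply mul_le_mul_of_nonneg_left _ (by positivity)
            exact Finset.sum_le_sum fun z _ => Finset.sum_le_sum fun z' _ => hpair z z'
        _ = (N ^ (m + 2) * bnsC (m + 1) ^ A.card) ^ 2 := by
            simp only [← Finset.mul_sum, sum_pow_diff]
            rw [mul_pow, ← pow_mul (bnsC (m + 1)), mul_comm A.card 2, pow_mul, bnsC_sq]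
            simp only [Finset.sum_const, Finset.card_univ, nsmul_eq_mul]
            have : (Fintype.card (Fin n → Bool) : ℝ) = N := by simp [hN]
            rw [this]
            ring
    apply abs_le_of_sq_le_sq hsq
    have := bnsC_nonneg (m + 1)
    positivity

/-- The sign `(-1)^GIP`. -/
def sgn {n k : ℕ} (X : Fin n → Fin k → Bool) : ℝ :=
  ∏ i, if (∀ j, X i j = true) then (-1 : ℝ) else 1

theorem sgn_eq {n k : ℕ} (X : Fin n → Fin k → Bool) :
    sgn X = if GIP n k X then (-1 : ℝ) else 1 := by
  unfold sgn GIP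
  rw [Finset.prod_ite]
  simp only [Finset.prod_const, one_pow, mul_one]
  by_cases h : (Finset.univ.filter (fun i : Fin n => ∀ j, X i j = true)).card % 2 = 1
  · rw [(Nat.odd_iff.mpr h).neg_one_pow]
    simp [h]
  · rw [(Nat.even_iff.mpr (by omega)).neg_one_pow]
    simp [h]

theorem dual_bound {n k : ℕ} {ι : Type*} (J : Finset ι) (a : ι → ℝ)
    (χ : ι → ((Fin n → Fin k → Bool) → ℝ))
    (happ : ∀ X, |(if GIP n k X then (1 : ℝ) else 0) - ∑ j ∈ J, a j * χ j X| ≤ 1 / 3)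
    (Ω : Finset (Fin n → Fin k → Bool)) (β : ℝ)
    (hβ : ∀ j ∈ J, |∑ X ∈ Ω, sgn X * χ j X| ≤ β) :
    (Ω.card : ℝ) / 6 - (∑ X ∈ Ω, sgn X) / 2 ≤ β * ∑ j ∈ J, |a j| := by
  have h1 : (Ω.card : ℝ) / 6 - (∑ X ∈ Ω, sgn X) / 2 ≤
      ∑ X ∈ Ω, -(sgn X * ∑ j ∈ J, a j * χ j X) := by
    have : (Ω.card : ℝ) / 6 - (∑ X ∈ Ω, sgn X) / 2 = ∑ X ∈ Ω, (1 / 6 - sgn X / 2) := by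
      rw [Finset.sum_sub_distrib, Finset.sum_const, Finset.sum_div]
      simp
      ring
    rw [this]
    apply Finset.sum_le_sum
    intro X _
    have h := abs_le.mp (happ X)
    rw [sgn_eq]
    by_cases hg : GIP n k X = true
    · simp only [hg, if_true] at h ⊢
      linarith [h.1, h.2]
    · simp only [hg] at h ⊢
      norm_num at h ⊢
      linarith [h.1, h.2]
  have h2 : ∑ X ∈ Ω, -(sgn X * ∑ j ∈ J, a j * χ j X) =
      ∑ j ∈ J, -(a j * ∑ X ∈ Ω, sgn X * χ j X) := by
    simp only [Finset.sum_neg_distrib, Finset.mul_sum]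
    rw [Finset.sum_comm]
    congr 1
    apply Finset.sum_congr rfl
    intro j _
    apply Finset.sum_congr rfl
    intro X _
    ring
  refine h1.trans ?_
  rw [h2, Finset.mul_sum]
  apply Finset.sum_le_sum
  intro j hj
  calc -(a j * ∑ X ∈ Ω, sgn X * χ j X) ≤ |a j * ∑ X ∈ Ω, sgn X * χ j X| := neg_le_abs _
    _ = |a j| * |∑ X ∈ Ω, sgn X * χ j X| := abs_mul _ _
    _ ≤ |a j| * β := mul_le_mul_of_nonneg_left (hβ j hj) (abs_nonneg _)
    _ = β * |a j| := mul_comm _ _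

/-- Rows all of whose zeros are in the range of `e`. -/
def IsB {k l : ℕ} (e : Fin l → Fin k) (r : Fin k → Bool) : Prop :=
  ∀ j, (∀ a, e a ≠ j) → r j = true

instance {k l : ℕ} (e : Fin l → Fin k) (r : Fin k → Bool) : Decidable (IsB e r) := by
  unfold IsB
  infer_instance

theorem isB_extend {k l : ℕ} (e : Fin l → Fin k) (u : Fin l → Bool) :
    IsB e (Function.extend e u (fun _ => true)) := by
  intro j hj
  rw [Function.extend_apply']
  rintro ⟨a, ha⟩
  exact hj a ha

theorem extend_of_isB {k l : ℕ} (e : Fin l → Fin k) (he : Function.Injective e)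
    (r : Fin k → Bool) (hr : IsB e r) :
    Function.extend e (fun a => r (e a)) (fun _ => true) = r := by
  funext j
  by_cases h : ∃ a, e a = j
  · obtain ⟨a, rfl⟩ := h
    rw [he.extend_apply]
  · rw [Function.extend_apply' _ _ _ h]
    exact (hr j (fun a ha => h ⟨a, ha⟩)).symm

/-- Rows with at most `l` zeros. -/
def Rset (k l : ℕ) : Finset (Fin k → Bool) :=
  Finset.univ.filter (fun r => (Finset.univ.filter (fun j => r j = false)).card ≤ l)

theorem isB_mem {k l : ℕ} (e : Fin l → Fin k) (r : Fin k → Bool) (hr : IsB e r) :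
    r ∈ Rset k l := by
  unfold Rset
  simp only [Finset.mem_filter, Finset.mem_univ, true_and]
  have : Finset.univ.filter (fun j => r j = false) ⊆ Finset.univ.image e := by
    intro j hj
    simp only [Finset.mem_filter, Finset.mem_univ, true_and] at hj
    by_contra hc
    have := hr j (by
      intro a ha
      exact hc (by simp [← ha]))
    simp [this] at hj
  calc _ ≤ (Finset.univ.image e).card := Finset.card_le_card this
    _ ≤ _ := Finset.card_image_le
    _ = l := by simp

theorem card_isB {k l : ℕ} (e : Fin l → Fin k) (he : Function.Injective e) :
    ((Rset k l).filter (fun r => IsB e r)).card = 2 ^ l := by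
  have : (Finset.univ : Finset (Fin l → Bool)).card = 2 ^ l := by simp
  rw [← this]
  symm
  apply Finset.card_nbij' (fun u => Function.extend e u (fun _ => true)) (fun r a => r (e a))
  · intro u _
    simp only [Finset.coe_filter, Set.mem_ofPred_eq]
    exact ⟨isB_mem e _ (isB_extend e u), isB_extend e u⟩
  · intro r _
    simp
  · intro u _
    funext a
    exact he.extend_apply _ _ _
  · intro r hr
    simp only [Finset.coe_filter, Set.mem_ofPred_eq] at hr
    exact extend_of_isB e he r hr.2

theorem card_Rset (k l : ℕ) : (Rset k l).card = ∑ i ∈ Finset.range (l + 1), k.choose i := by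
  have h1 : (Rset k l).card =
      ((Finset.range (l + 1)).biUnion
        (fun i => Finset.powersetCard i (Finset.univ : Finset (Fin k)))).card := by
    apply Finset.card_nbij' (fun r => Finset.univ.filter (fun j => r j = false))
      (fun s j => decide (j ∉ s))
    · intro r hr
      simpa [Rset, Finset.mem_powersetCard, Nat.lt_succ_iff] using hr
    · intro s hs
      simpa [Rset, Finset.mem_powersetCard, Nat.lt_succ_iff] using hs
    · intro r _
      funext j
      simp
    · intro s _
      ext j
      simp
  rw [h1, Finset.card_biUnion]
  · simp
  · intro i _ j _ hij
    exact Finset.pairwise_disjoint_powersetCard _ hij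

/-- Replace the `B`-rows of `X` by the data in `U`. -/
noncomputable def repl {n k l : ℕ} (e : Fin l → Fin k) (X : Fin n → Fin k → Bool)
    (U : Fin l → Fin n → Bool) : Fin n → Fin k → Bool :=
  fun i => if IsB e (X i) then Function.extend e (fun a => U a i) (fun _ => true) else X i

/-- Flip the `B`-rows. -/
noncomputable def flipRow {k l : ℕ} (e : Fin l → Fin k) (u : Fin l → Bool) (r : Fin k → Bool) :
    Fin k → Bool :=
  if IsB e r then Function.extend e (fun a => xor (u a) (r (e a))) (fun _ => true) else r

theorem flipRow_flipRow {k l : ℕ} (e : Fin l → Fin k) (he : Function.Injective e)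
    (u : Fin l → Bool) (r : Fin k → Bool) : flipRow e u (flipRow e u r) = r := by
  by_cases h : IsB e r
  · have h1 : flipRow e u r =
        Function.extend e (fun a => xor (u a) (r (e a))) (fun _ => true) := by
      simp [flipRow, h]
    rw [h1, flipRow, if_pos (isB_extend e _)]
    simp only [he.extend_apply]
    conv_rhs => rw [← extend_of_isB e he r h]
    congr 1
    funext a
    cases u a <;> cases r (e a) <;> rfl
  · simp [flipRow, h]

theorem flipRow_mem {k l : ℕ} (e : Fin l → Fin k)
    (u : Fin l → Bool) (r : Fin k → Bool) (hr : r ∈ Rset k l) : flipRow e u r ∈ Rset k l := by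
  by_cases h : IsB e r
  · rw [flipRow, if_pos h]
    exact isB_mem e _ (isB_extend e _)
  · rw [flipRow, if_neg h]
    exact hr

theorem averaging {n k l : ℕ} (e : Fin l → Fin k) (he : Function.Injective e)
    (h : (Fin n → Fin k → Bool) → ℝ) :
    ∑ X ∈ Fintype.piFinset (fun _ : Fin n => Rset k l), ∑ U, h (repl e X U) =
      (2 ^ n) ^ l * ∑ X ∈ Fintype.piFinset (fun _ : Fin n => Rset k l), h X := by
  have h1 : ∀ X : Fin n → Fin k → Bool, ∑ U, h (repl e X U) =
      ∑ U : Fin l → Fin n → Bool, h (fun i => flipRow e (fun a => U a i) (X i)) := by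
    intro X
    let p : (Fin l → Fin n → Bool) → (Fin l → Fin n → Bool) :=
      fun U a i => xor (U a i) (X i (e a))
    have hp : Function.Involutive p := by
      intro U
      funext a i
      simp only [p]
      cases U a i <;> cases X i (e a) <;> rfl
    rw [← hp.bijective.sum_comp]
    rfl
  simp only [h1]
  rw [Finset.sum_comm]
  have h2 : ∀ U : Fin l → Fin n → Bool,
      ∑ X ∈ Fintype.piFinset (fun _ : Fin n => Rset k l),
        h (fun i => flipRow e (fun a => U a i) (X i)) =
      ∑ X ∈ Fintype.piFinset (fun _ : Fin n => Rset k l), h X := by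
    intro U
    apply Finset.sum_nbij' (fun X i => flipRow e (fun a => U a i) (X i))
      (fun X i => flipRow e (fun a => U a i) (X i))
    · intro X hX
      rw [Fintype.mem_piFinset] at hX ⊢
      exact fun i => flipRow_mem e _ _ (hX i)
    · intro X hX
      rw [Fintype.mem_piFinset] at hX ⊢
      exact fun i => flipRow_mem e _ _ (hX i)
    · intro X _
      funext i
      exact flipRow_flipRow e he _ _
    · intro X _
      funext i
      exact flipRow_flipRow e he _ _
    · intro X _
      rfl
  simp only [h2]
  simp

theorem sgn_repl {n k l : ℕ} (e : Fin l → Fin k) (he : Function.Injective e)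
    (X : Fin n → Fin k → Bool) (U : Fin l → Fin n → Bool) :
    sgn (repl e X U) = sgA (Finset.univ.filter (fun i => IsB e (X i))) U := by
  unfold sgn sgA
  apply Finset.prod_congr rfl
  intro i _
  congr 1
  simp only [Finset.mem_filter, Finset.mem_univ, true_and, eq_iff_iff]
  by_cases h : IsB e (X i)
  · simp only [repl, h, if_true, true_and]
    constructor
    · intro hj a
      rw [← hj (e a), he.extend_apply]
    · intro ha j
      by_cases hj : ∃ a, e a = j
      · obtain ⟨a, rfl⟩ := hj
        rw [he.extend_apply, ha]
      · rw [Function.extend_apply' _ _ _ hj]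
  · simp only [repl, h, if_false, false_and, iff_false]
    intro hj
    exact h (fun j _ => hj j)

theorem main_disc {n k m : ℕ} (e : Fin (m + 1) → Fin k) (he : Function.Injective e)
    (φ : Fin (m + 1) → ((Fin n → Fin k → Bool) → ℝ))
    (hφ : ∀ a X, |φ a X| ≤ 1)
    (hd : ∀ a X Y, (∀ i, ∀ j', j' ≠ e a → X i j' = Y i j') → φ a X = φ a Y) :
    |∑ X ∈ Fintype.piFinset (fun _ : Fin n => Rset k (m + 1)), sgn X * ∏ a, φ a X| ≤
      ((Rset k (m + 1)).card - 2 ^ (m + 1) * (1 - bnsC m)) ^ n := by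
  have hav := averaging (n := n) e he (fun X => sgn X * ∏ a, φ a X)
  have hpos : (0 : ℝ) < (2 ^ n) ^ (m + 1) := by positivity
  have hX : ∀ X : Fin n → Fin k → Bool, |∑ U, sgn (repl e X U) * ∏ a, φ a (repl e X U)| ≤
      (2 ^ n) ^ (m + 1) * ∏ i, (if IsB e (X i) then bnsC m else 1) := by
    intro X
    have := bns n m (Finset.univ.filter (fun i => IsB e (X i)))
      (fun a U => φ a (repl e X U)) (fun a U => hφ a _) ?_
    · rw [pow_card_eq] at this
      simpa only [sgn_repl e he, Finset.mem_filter, Finset.mem_univ, true_and] using this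
    · intro a U V hUV
      apply hd
      intro i j' hj'
      unfold repl
      split_ifs with hB
      · by_cases hj : ∃ b, e b = j'
        · obtain ⟨b, rfl⟩ := hj
          rw [he.extend_apply, he.extend_apply, hUV b (fun hb => hj' (by rw [hb]))]
        · rw [Function.extend_apply' _ _ _ hj, Function.extend_apply' _ _ _ hj]
      · rfl
  have hrow : ∑ r ∈ Rset k (m + 1), (if IsB e r then bnsC m else 1) =
      (Rset k (m + 1)).card - 2 ^ (m + 1) * (1 - bnsC m) := by
    have h1 : ∀ r, (if IsB e r then bnsC m else 1) = 1 - (if IsB e r then (1 - bnsC m) else 0) := by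
      intro r
      split_ifs <;> ring
    simp only [h1]
    rw [Finset.sum_sub_distrib, ← Finset.sum_filter, Finset.sum_const, Finset.sum_const,
      card_isB e he]
    simp
  have hsum : ∑ X ∈ Fintype.piFinset (fun _ : Fin n => Rset k (m + 1)),
      ∏ i, (if IsB e (X i) then bnsC m else 1) =
      ((Rset k (m + 1)).card - 2 ^ (m + 1) * (1 - bnsC m)) ^ n := by
    rw [← hrow, ← Finset.prod_univ_sum (fun _ : Fin n => Rset k (m + 1))
      (fun _ r => if IsB e r then bnsC m else 1)]
    simp
  rw [← hsum]
  apply le_of_mul_le_mul_left _ hpos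
  calc _ = |(2 ^ n) ^ (m + 1) * ∑ X ∈ Fintype.piFinset (fun _ : Fin n => Rset k (m + 1)),
          sgn X * ∏ a, φ a X| := by rw [abs_mul, abs_of_pos hpos]
    _ = |∑ X ∈ Fintype.piFinset (fun _ : Fin n => Rset k (m + 1)),
          ∑ U, sgn (repl e X U) * ∏ a, φ a (repl e X U)| := by rw [← hav]
    _ ≤ ∑ X ∈ Fintype.piFinset (fun _ : Fin n => Rset k (m + 1)),
          |∑ U, sgn (repl e X U) * ∏ a, φ a (repl e X U)| := Finset.abs_sum_le_sum_abs _ _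
    _ ≤ ∑ X ∈ Fintype.piFinset (fun _ : Fin n => Rset k (m + 1)),
          (2 ^ n) ^ (m + 1) * ∏ i, (if IsB e (X i) then bnsC m else 1) :=
        Finset.sum_le_sum fun X _ => hX X
    _ = _ := by rw [Finset.mul_sum]

theorem sum_sgn (n k l : ℕ) :
    ∑ X ∈ Fintype.piFinset (fun _ : Fin n => Rset k l), sgn X = ((Rset k l).card - 2 : ℝ) ^ n := by
  have hrow : ∑ r ∈ Rset k l, (if ∀ j, r j = true then (-1 : ℝ) else 1) =
      (Rset k l).card - 2 := by
    have h1 : ∀ r : Fin k → Bool, (if ∀ j, r j = true then (-1 : ℝ) else 1) =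
        1 - (if r = (fun _ => true) then 2 else 0) := by
      intro r
      simp only [funext_iff]
      split_ifs <;> norm_num
    simp only [h1]
    rw [Finset.sum_sub_distrib, Finset.sum_ite_eq']
    simp [Rset]
  unfold sgn
  rw [← hrow, ← Finset.prod_univ_sum (fun _ : Fin n => Rset k l)
      (fun _ r => if ∀ j, r j = true then (-1 : ℝ) else 1)]
  simp

theorem cyl_disc {n k m : ℕ} (hmk : m + 1 ≤ k) (χ : (Fin n → Fin k → Bool) → ℝ)
    (S : Finset (Fin k)) (hS : S.card ≤ m + 1) (hχ : IsCylinderOn n k S χ) :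
    |∑ X ∈ Fintype.piFinset (fun _ : Fin n => Rset k (m + 1)), sgn X * χ X| ≤
      ((Rset k (m + 1)).card - 2 ^ (m + 1) * (1 - bnsC m)) ^ n := by
  obtain ⟨φ, h01, hdep, hprod⟩ := hχ
  obtain ⟨S', hSS', hcard⟩ := Finset.exists_superset_card_eq hS (by simpa using hmk)
  let e : Fin (m + 1) → Fin k := fun a => S'.orderEmbOfFin hcard a
  have he : Function.Injective e := (S'.orderEmbOfFin hcard).injective
  let ψ : Fin k → ((Fin n → Fin k → Bool) → ℝ) := fun j X => if j ∈ S then φ j X else 1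
  have hp : ∀ X, χ X = ∏ a, ψ (e a) X := by
    intro X
    have h1 : ∏ a, ψ (e a) X = ∏ j ∈ S', ψ j X := by
      rw [← Finset.prod_image (s := Finset.univ) (g := e) (f := fun j => ψ j X)
        (fun a _ b _ hab => he hab)]
      congr 1
      exact Finset.image_orderEmbOfFin_univ S' hcard
    rw [h1, hprod]
    simp only [ψ]
    rw [Finset.prod_ite_mem, Finset.inter_eq_right.mpr hSS']
  simp only [hp]
  apply main_disc e he (fun a => ψ (e a))
  · intro a X
    simp only [ψ]
    split_ifs with h
    · rcases h01 _ h X with h' | h' <;> simp [h']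
    · simp
  · intro a X Y hXY
    simp only [ψ]
    split_ifs with h
    · exact hdep _ h X Y hXY
    · rfl

/-- The row with a single zero at `j`. -/
def zrow {k : ℕ} (j : Fin k) : Fin k → Bool := fun j' => decide (j' ≠ j)

/-- The all-ones row. -/
def frow (k : ℕ) : Fin k → Bool := fun _ => true

theorem zrow_ne {k : ℕ} (j : Fin k) : zrow j ≠ frow k := by
  intro h
  have := congrFun h j
  simp [zrow, frow] at this

theorem zrow_inj {k : ℕ} {j j' : Fin k} (h : zrow j = zrow j') : j = j' := by
  have := congrFun h j
  simpa [zrow] using this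

/-- Swap the all-ones row with the row having a zero at `j`, in row `i`. -/
def swapRow {n k : ℕ} (i : Fin n) (j : Fin k) (X : Fin n → Fin k → Bool) : Fin n → Fin k → Bool :=
  Function.update X i (Equiv.swap (frow k) (zrow j) (X i))

theorem swapRow_swapRow {n k : ℕ} (i : Fin n) (j : Fin k) (X : Fin n → Fin k → Bool) :
    swapRow i j (swapRow i j X) = X := by
  unfold swapRow
  simp

theorem sgn_swapRow {n k : ℕ} (i : Fin n) (j : Fin k) (X : Fin n → Fin k → Bool)
    (h : X i = frow k ∨ X i = zrow j) : sgn (swapRow i j X) = - sgn X := by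
  unfold sgn
  rw [← Finset.mul_prod_erase _ _ (Finset.mem_univ i),
    ← Finset.mul_prod_erase _ (fun i => if ∀ j, X i j = true then (-1 : ℝ) else 1)
      (Finset.mem_univ i), ← neg_mul]
  congr 1
  · have hf : ∀ r : Fin k → Bool, (∀ j, r j = true) ↔ r = frow k := by
      intro r
      rw [funext_iff]
      rfl
    simp only [hf]
    rcases h with h | h
    · simp [swapRow, h, zrow_ne]
    · simp [swapRow, h, zrow_ne]
  · apply Finset.prod_congr rfl
    intro i' hi'
    have : i' ≠ i := Finset.ne_of_mem_erase hi'
    simp [swapRow, this]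

theorem swapRow_agree {n k : ℕ} (i : Fin n) (j : Fin k) (X : Fin n → Fin k → Bool)
    (h : X i = frow k ∨ X i = zrow j) : ∀ i', ∀ j', j' ≠ j → swapRow i j X i' j' = X i' j' := by
  intro i' j' hj'
  by_cases hi : i' = i
  · subst hi
    rcases h with h | h <;> simp [swapRow, h, zrow, frow, hj']
  · simp [swapRow, hi]

theorem sum_swap_zero {n k : ℕ} (i : Fin n) (j : Fin k) (Q : Finset (Fin n → Fin k → Bool))
    (hQ : ∀ X ∈ Q, X i = frow k ∨ X i = zrow j) (hm : ∀ X ∈ Q, swapRow i j X ∈ Q)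
    (h : (Fin n → Fin k → Bool) → ℝ)
    (hh : ∀ X Y, (∀ i', ∀ j', j' ≠ j → X i' j' = Y i' j') → h X = h Y) :
    ∑ X ∈ Q, sgn X * h X = 0 := by
  have h1 : ∑ X ∈ Q, sgn X * h X = ∑ X ∈ Q, -(sgn X * h X) := by
    apply Finset.sum_nbij' (swapRow i j) (swapRow i j) hm hm
    · intro X _
      exact swapRow_swapRow i j X
    · intro X _
      exact swapRow_swapRow i j X
    · intro X hX
      rw [sgn_swapRow i j X (hQ X hX), hh _ _ (swapRow_agree i j X (hQ X hX))]
      ring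
  rw [Finset.sum_neg_distrib] at h1
  linarith

/-- Row of column `j` in the pairing construction. -/
def gmap {n k : ℕ} (hnk : k + 1 ≤ 2 * n) (j : Fin k) : Fin n :=
  ⟨(j.val + 1) / 2, by have := j.isLt; omega⟩

/-- Allowed values of row `i` in the pairing construction. -/
def Prow {n k : ℕ} (hnk : k + 1 ≤ 2 * n) (i : Fin n) : Finset (Fin k → Bool) :=
  insert (frow k) ((Finset.univ.filter (fun j => gmap hnk j = i)).image zrow)

theorem swap_mem_Prow {n k : ℕ} (hnk : k + 1 ≤ 2 * n) (j : Fin k) (X : Fin n → Fin k → Bool)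
    (hX : X ∈ Fintype.piFinset (Prow hnk)) (h : X (gmap hnk j) = frow k ∨ X (gmap hnk j) = zrow j) :
    swapRow (gmap hnk j) j X ∈ Fintype.piFinset (Prow hnk) := by
  rw [Fintype.mem_piFinset] at hX ⊢
  intro i
  by_cases hi : i = gmap hnk j
  · subst hi
    rcases h with h | h
    · simp [swapRow, h, Prow]
      right
      exact ⟨j, rfl, rfl⟩
    · simp [swapRow, h, Prow]
  · simpa [swapRow, hi] using hX i

theorem row_zero {n k : ℕ} (hnk : k + 1 ≤ 2 * n) (hk : 0 < k) (X : Fin n → Fin k → Bool)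
    (hX : X ∈ Fintype.piFinset (Prow hnk)) :
    X (gmap hnk ⟨0, hk⟩) = frow k ∨ X (gmap hnk ⟨0, hk⟩) = zrow ⟨0, hk⟩ := by
  rw [Fintype.mem_piFinset] at hX
  have := hX (gmap hnk ⟨0, hk⟩)
  simp only [Prow, Finset.mem_insert, Finset.mem_image, Finset.mem_filter, Finset.mem_univ,
    true_and] at this
  rcases this with h | ⟨j, hj, h⟩
  · exact Or.inl h
  · right
    rw [← h]
    congr 1
    simp only [gmap, Fin.mk.injEq] at hj
    apply Fin.ext
    simp only
    omega

theorem pair_sum_sgn {n k : ℕ} (hnk : k + 1 ≤ 2 * n) (hk : 0 < k) :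
    ∑ X ∈ Fintype.piFinset (Prow (n := n) (k := k) hnk), sgn X = 0 := by
  have := sum_swap_zero (gmap hnk ⟨0, hk⟩) ⟨0, hk⟩ (Fintype.piFinset (Prow hnk))
    (fun X hX => row_zero hnk hk X hX)
    (fun X hX => swap_mem_Prow hnk _ X hX (row_zero hnk hk X hX)) (fun _ => 1)
    (fun _ _ _ => rfl)
  simpa using this

theorem card_rest {n k : ℕ} (hnk : k + 1 ≤ 2 * n) (j : Fin k) :
    3 * ((Fintype.piFinset (Prow (n := n) hnk)).filter
      (fun X => ¬ (X (gmap hnk j) = frow k ∨ X (gmap hnk j) = zrow j))).card ≤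
    (Fintype.piFinset (Prow (n := n) hnk)).card := by
  set i := gmap hnk j with hi
  set E : Finset (Fin k → Bool) := (Prow hnk i).filter (fun r => ¬ (r = frow k ∨ r = zrow j)) with hE
  have h1 : (Fintype.piFinset (Prow (n := n) hnk)).filter
      (fun X => ¬ (X i = frow k ∨ X i = zrow j)) =
      Fintype.piFinset (Function.update (Prow hnk) i E) := by
    ext X
    simp only [Finset.mem_filter, Fintype.mem_piFinset]
    constructor
    · rintro ⟨hX, h⟩ i'
      by_cases hi' : i' = i
      · subst hi'
        simp only [Function.update_self, hE, Finset.mem_filter]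
        exact ⟨hX _, h⟩
      · simpa [hi'] using hX i'
    · intro hX
      have hXi := hX i
      simp only [Function.update_self, hE, Finset.mem_filter] at hXi
      refine ⟨?_, hXi.2⟩
      intro i'
      by_cases hi' : i' = i
      · subst hi'
        exact hXi.1
      · simpa [hi'] using hX i'
  rw [h1, Fintype.card_piFinset, Fintype.card_piFinset,
    ← Finset.mul_prod_erase _ _ (Finset.mem_univ i),
    ← Finset.mul_prod_erase _ (fun i => (Prow hnk i).card) (Finset.mem_univ i)]
  have h2 : ∏ x ∈ Finset.univ.erase i, (Function.update (Prow hnk) i E x).card =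
      ∏ x ∈ Finset.univ.erase i, (Prow hnk x).card := by
    apply Finset.prod_congr rfl
    intro x hx
    rw [Function.update_of_ne (Finset.ne_of_mem_erase hx)]
  rw [h2, ← mul_assoc]
  apply Nat.mul_le_mul_right
  rw [Function.update_self]
  have h3 : E.card ≤ 1 := by
    rw [Finset.card_le_one]
    intro a ha b hb
    simp only [hE, Prow, Finset.mem_filter, Finset.mem_insert, Finset.mem_image, Finset.mem_univ,
      true_and, not_or] at ha hb
    obtain ⟨ha1, ha2, ha3⟩ := ha
    obtain ⟨hb1, hb2, hb3⟩ := hb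
    rcases ha1 with ha1 | ⟨p, hp, rfl⟩
    · exact absurd ha1 ha2
    rcases hb1 with hb1 | ⟨q, hq, rfl⟩
    · exact absurd hb1 hb2
    have hpj : p ≠ j := fun h => ha3 (by rw [h])
    have hqj : q ≠ j := fun h => hb3 (by rw [h])
    congr 1
    simp only [hi, gmap, Fin.mk.injEq] at hp hq
    have h5 : p.val ≠ j.val := fun h => hpj (Fin.ext h)
    have h6 : q.val ≠ j.val := fun h => hqj (Fin.ext h)
    apply Fin.ext
    omega
  have h4 : E.card + 2 ≤ (Prow hnk i).card := by
    have hd : E ∪ {frow k, zrow j} ⊆ Prow hnk i := by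
      intro r hr
      simp only [Finset.mem_union, Finset.mem_insert, Finset.mem_singleton] at hr
      rcases hr with hr | rfl | rfl
      · exact (Finset.mem_filter.mp hr).1
      · simp [Prow]
      · simp only [Prow, Finset.mem_insert, Finset.mem_image, Finset.mem_filter, Finset.mem_univ,
          true_and]
        exact Or.inr ⟨j, hi.symm, rfl⟩
    have hdis : Disjoint E {frow k, zrow j} := by
      rw [Finset.disjoint_left]
      intro r hr hr2
      simp only [Finset.mem_insert, Finset.mem_singleton] at hr2
      exact (Finset.mem_filter.mp hr).2 hr2
    have := Finset.card_le_card hd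
    rw [Finset.card_union_of_disjoint hdis, Finset.card_pair (zrow_ne j).symm] at this
    exact this
  omega

theorem pair_disc {n k : ℕ} (hnk : k + 1 ≤ 2 * n) (hk : 0 < k) (χ : (Fin n → Fin k → Bool) → ℝ)
    (h01 : ∀ X, χ X = 0 ∨ χ X = 1) (j : Fin k)
    (hd : ∀ X Y, (∀ i', ∀ j', j' ≠ j → X i' j' = Y i' j') → χ X = χ Y) :
    |∑ X ∈ Fintype.piFinset (Prow (n := n) (k := k) hnk), sgn X * χ X| ≤
      (Fintype.piFinset (Prow (n := n) (k := k) hnk)).card / 6 := by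
  set Ω := Fintype.piFinset (Prow (n := n) (k := k) hnk) with hΩ
  set i := gmap (n := n) hnk j with hi
  let P : (Fin n → Fin k → Bool) → Prop := fun X => X i = frow k ∨ X i = zrow j
  rw [← Finset.sum_filter_add_sum_filter_not Ω P]
  have hQ1 : ∑ X ∈ Ω.filter P, sgn X * χ X = 0 := by
    apply sum_swap_zero i j _ _ _ _ hd
    · intro X hX
      exact (Finset.mem_filter.mp hX).2
    · intro X hX
      obtain ⟨hX1, hX2⟩ := Finset.mem_filter.mp hX
      refine Finset.mem_filter.mpr ⟨swap_mem_Prow hnk j X hX1 hX2, ?_⟩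
      simp only [P] at hX2 ⊢
      rcases hX2 with h | h <;> simp [swapRow, h]
  rw [hQ1, zero_add]
  set Q := Ω.filter (fun X => ¬ P X) with hQ
  have hcard : 3 * (Q.card : ℝ) ≤ Ω.card := by
    have := card_rest (n := n) hnk j
    exact_mod_cast this
  have hs0 : ∑ X ∈ Q, sgn X = 0 := by
    by_cases h0 : i = gmap hnk ⟨0, hk⟩
    · have hj : j = ⟨0, hk⟩ := by
        simp only [hi, gmap, Fin.mk.injEq] at h0
        apply Fin.ext
        simp only
        omega
      have : Q = ∅ := by
        rw [hQ, Finset.filter_eq_empty_iff]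
        intro X hX
        simp only [P, not_not]
        rw [h0, hj]
        exact row_zero hnk hk X hX
      rw [this]
      simp
    · have := sum_swap_zero (gmap hnk ⟨0, hk⟩) ⟨0, hk⟩ Q
        (fun X hX => row_zero hnk hk X (Finset.mem_filter.mp hX).1) ?_ (fun _ => 1)
        (fun _ _ _ => rfl)
      · simpa using this
      · intro X hX
        obtain ⟨hX1, hX2⟩ := Finset.mem_filter.mp hX
        refine Finset.mem_filter.mpr
          ⟨swap_mem_Prow hnk _ X hX1 (row_zero hnk hk X hX1), ?_⟩
        simpa [P, swapRow, h0] using hX2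
  have h2 : ∑ X ∈ Q, sgn X * χ X = ∑ X ∈ Q, sgn X * (χ X - 1 / 2) := by
    simp only [mul_sub, Finset.sum_sub_distrib, ← Finset.sum_mul, hs0]
    ring
  rw [h2]
  calc _ ≤ ∑ X ∈ Q, |sgn X * (χ X - 1 / 2)| := Finset.abs_sum_le_sum_abs _ _
    _ ≤ ∑ X ∈ Q, (1 / 2 : ℝ) := by
        apply Finset.sum_le_sum
        intro X _
        have : |sgn X| = 1 := by
          rw [sgn_eq]
          split_ifs <;> simp
        rw [abs_mul, this]
        rcases h01 X with h | h <;> rw [h] <;> norm_num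
    _ = Q.card / 2 := by
        simp
        ring
    _ ≤ _ := by linarith

theorem cyl_one {n k : ℕ} (hk : 0 < k) (χ : (Fin n → Fin k → Bool) → ℝ)
    (S : Finset (Fin k)) (hS : S.card ≤ 1) (hχ : IsCylinderOn n k S χ) :
    (∀ X, χ X = 0 ∨ χ X = 1) ∧
    ∃ j, ∀ X Y, (∀ i', ∀ j', j' ≠ j → X i' j' = Y i' j') → χ X = χ Y := by
  obtain ⟨φ, h01, hdep, hprod⟩ := hχ
  rcases Nat.le_one_iff_eq_zero_or_eq_one.mp hS with h | h
  · rw [Finset.card_eq_zero] at h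
    subst h
    simp only [Finset.prod_empty] at hprod
    exact ⟨fun X => Or.inr (hprod X), ⟨0, hk⟩, fun X Y _ => by rw [hprod, hprod]⟩
  · obtain ⟨j, rfl⟩ := Finset.card_eq_one.mp h
    simp only [Finset.prod_singleton] at hprod
    refine ⟨fun X => ?_, j, fun X Y hXY => ?_⟩
    · rw [hprod]
      exact h01 j (by simp) X
    · rw [hprod, hprod]
      exact hdep j (by simp) X Y hXY

theorem cyl_abs {n k : ℕ} (χ : (Fin n → Fin k → Bool) → ℝ)
    (S : Finset (Fin k)) (hχ : IsCylinderOn n k S χ) (X : Fin n → Fin k → Bool) :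
    |χ X| ≤ 1 := by
  obtain ⟨φ, h01, hdep, hprod⟩ := hχ
  rw [hprod, Finset.abs_prod]
  apply Finset.prod_le_one
  · intro j _
    exact abs_nonneg _
  · intro j hj
    rcases h01 j hj X with h | h <;> simp [h]

theorem poly_ineq (x : ℝ) (h0 : 0 ≤ x) (h1 : x ≤ 1 / 8) :
    (1 - 7 / 3 * x) ^ 3 ≤ (1 - x) ^ 7 := by
  have h : (1 - x) ^ 7 - (1 - 7 / 3 * x) ^ 3 =
      x ^ 2 * ((14 / 3 - 602 / 27 * x) + x ^ 2 * ((35 - 21 * x) + x ^ 2 * (7 - x))) := by ring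
  have h2 : 0 ≤ x ^ 2 * ((14 / 3 - 602 / 27 * x) + x ^ 2 * ((35 - 21 * x) + x ^ 2 * (7 - x))) := by
    have e1 : 0 ≤ 14 / 3 - 602 / 27 * x := by linarith
    have e2 : 0 ≤ 35 - 21 * x := by linarith
    have e3 : 0 ≤ 7 - x := by linarith
    positivity
  linarith

set_option maxHeartbeats 2000000

/-- If `Π = Σ_j a_j χ_j` is a linear combination of `ℓ`-cylinder
intersections with `|Π| ≤ 1` everywhere and `|GIP_{n,k} − Π| ≤ 1/3` everywhere, then
`Σ_j |a_j| ≥ (1/3)·(1 − 1/(2^{ℓ−1}·C(k,≤ℓ)))^{−n}`. -/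
theorem stmt_8 (n k ℓ : ℕ) (hn : 0 < n) (hk : 0 < k) (hℓ : 0 < ℓ) (hℓk : ℓ ≤ k)
    {ι : Type*} (J : Finset ι) (a : ι → ℝ) (χ : ι → ((Fin n → Fin k → Bool) → ℝ))
    (hcyl : ∀ j ∈ J, ∃ S : Finset (Fin k), S.card ≤ ℓ ∧ IsCylinderOn n k S (χ j))
    (hbnd : ∀ X, |∑ j ∈ J, a j * χ j X| ≤ 1)
    (happ : ∀ X, |(if GIP n k X then (1 : ℝ) else 0) - ∑ j ∈ J, a j * χ j X| ≤ 1 / 3) :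
    (1 / 3 : ℝ) *
        ((1 - 1 / ((2 : ℝ) ^ (ℓ - 1) *
          ∑ i ∈ Finset.range (ℓ + 1), (k.choose i : ℝ))) ^ n)⁻¹ ≤
      ∑ j ∈ J, |a j| := by
  have hA0 : 0 ≤ ∑ j ∈ J, |a j| := Finset.sum_nonneg fun _ _ => abs_nonneg _
  obtain ⟨m, rfl⟩ : ∃ m, ℓ = m + 1 := ⟨ℓ - 1, by omega⟩
  have hC : (∑ i ∈ Finset.range (m + 1 + 1), (k.choose i : ℝ)) = (Rset k (m + 1)).card := by
    rw [card_Rset]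
    push_cast
    rfl
  rw [hC, Nat.add_sub_cancel]
  set C : ℝ := ((Rset k (m + 1)).card : ℝ) with hCdef
  have hC2 : (2 : ℝ) ^ (m + 1) ≤ C := by
    have h1 := card_isB (Fin.castLE hℓk) (Fin.castLE_injective hℓk)
    have h2 := Finset.card_filter_le (Rset k (m + 1)) (fun r => IsB (Fin.castLE hℓk) r)
    rw [h1] at h2
    rw [hCdef]
    exact_mod_cast h2
  have h2m : (1 : ℝ) ≤ 2 ^ m := one_le_pow₀ (by norm_num)
  have hC2' : (2 : ℝ) ≤ C := by
    rw [pow_succ] at hC2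
    linarith
  have hCpos : 0 < C := by linarith
  set x : ℝ := 1 / (2 ^ m * C) with hx
  have hxC : x * (2 ^ m * C) = 1 := by
    rw [hx]
    field_simp
  have hx0 : 0 < x := by positivity
  have hxhalf : x ≤ 1 / 2 := by
    rw [hx]
    apply one_div_le_one_div_of_le (by norm_num)
    nlinarith
  set τ : ℝ := (1 - x) ^ n with hτ
  have hτ0 : 0 < τ := pow_pos (by linarith) n
  set A : ℝ := ∑ j ∈ J, |a j| with hA
  suffices h : 1 / 3 ≤ A * τ by
    rw [← div_eq_mul_inv, div_le_iff₀ hτ0]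
    exact h
  by_cases hbig : 1 / 2 ≤ τ
  · -- trivial bound
    have hA23 : 2 / 3 ≤ A := by
      let X : Fin n → Fin k → Bool := fun i _ => decide (i = ⟨0, hn⟩)
      have hg : GIP n k X = true := by
        have : (Finset.univ.filter (fun i : Fin n => ∀ j, X i j = true)) = {⟨0, hn⟩} := by
          ext i
          simp only [X, Finset.mem_filter, Finset.mem_univ, true_and, decide_eq_true_eq,
            Finset.mem_singleton]
          exact ⟨fun h => h ⟨0, hk⟩, fun h _ => h⟩
        unfold GIP
        rw [this]
        simp
      have h1 := abs_le.mp (happ X)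
      simp only [hg, if_true] at h1
      have h2 : ∑ j ∈ J, a j * χ j X ≤ A := by
        rw [hA]
        apply Finset.sum_le_sum
        intro j hj
        obtain ⟨S, _, hS⟩ := hcyl j hj
        calc a j * χ j X ≤ |a j * χ j X| := le_abs_self _
          _ = |a j| * |χ j X| := abs_mul _ _
          _ ≤ |a j| * 1 := mul_le_mul_of_nonneg_left (cyl_abs _ S hS X) (abs_nonneg _)
          _ = |a j| := mul_one _
      linarith [h1.2]
    nlinarith
  push Not at hbig
  have hdual := dual_bound J a χ happ (Fintype.piFinset (fun _ : Fin n => Rset k (m + 1)))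
    ((C - 2 ^ (m + 1) * (1 - bnsC m)) ^ n) (by
      intro j hj
      obtain ⟨S, hS, hcy⟩ := hcyl j hj
      exact cyl_disc hℓk (χ j) S hS hcy)
  rw [sum_sgn, Fintype.card_piFinset] at hdual
  simp only [Finset.prod_const, Finset.card_univ, Fintype.card_fin, Nat.cast_pow] at hdual
  rw [← hCdef, ← hA] at hdual
  have hCn : 0 < C ^ n := by positivity
  cases m with
  | zero =>
    simp only [bnsC, pow_zero, one_mul, zero_add, pow_one, sub_zero, mul_one] at hdual hxC hC2
    have hfac : (C - 2) ^ n ≤ C ^ n * τ ^ 2 := by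
      rw [hτ, ← pow_mul, mul_comm n 2, pow_mul, ← mul_pow]
      apply pow_le_pow_left₀ (by linarith)
      nlinarith
    have hτ2 : 1 / 6 ≤ (A + 1 / 2) * τ ^ 2 := by
      have h1 : C ^ n * (1 / 6) ≤ C ^ n * ((A + 1 / 2) * τ ^ 2) := by nlinarith
      exact le_of_mul_le_mul_left h1 hCn
    by_cases h3 : τ ≤ 1 / 3
    · have h4 : τ ^ 2 ≤ 1 / 9 := by nlinarith
      nlinarith [mul_nonneg hA0 hτ0.le]
    · push Not at h3
      have hCk : C = k + 1 := by
        rw [← hC]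
        simp [Finset.sum_range_succ]
        ring
      have hbern : 1 + (n : ℝ) * (-x) ≤ (1 + (-x)) ^ n :=
        one_add_mul_le_pow (by linarith) n
      have hnk : k + 1 ≤ 2 * n := by
        have h5 : 1 / 2 < n * x := by
          have : (1 + (-x)) ^ n = τ := by rw [hτ, sub_eq_add_neg]
          linarith
        have h6 : C < 2 * n := by nlinarith
        rw [hCk] at h6
        have : k + 1 < 2 * n := by exact_mod_cast h6
        omega
      have hd2 := dual_bound J a χ happ (Fintype.piFinset (Prow (n := n) (k := k) hnk))
        ((Fintype.piFinset (Prow (n := n) (k := k) hnk)).card / 6) (by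
          intro j hj
          obtain ⟨S, hS, hcy⟩ := hcyl j hj
          obtain ⟨h01, j', hj'⟩ := cyl_one hk (χ j) S hS hcy
          exact pair_disc hnk hk (χ j) h01 j' hj')
      rw [pair_sum_sgn hnk hk, ← hA] at hd2
      have hNpos : (0 : ℝ) < (Fintype.piFinset (Prow (n := n) (k := k) hnk)).card := by
        rw [Nat.cast_pos, Finset.card_pos]
        refine ⟨fun _ => frow k, ?_⟩
        rw [Fintype.mem_piFinset]
        intro i
        simp [Prow]
      have hA1 : 1 ≤ A := by
        have h7 : ((Fintype.piFinset (Prow (n := n) (k := k) hnk)).card / 6 : ℝ) * 1 ≤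
          ((Fintype.piFinset (Prow (n := n) (k := k) hnk)).card / 6 : ℝ) * A := by linarith
        exact le_of_mul_le_mul_left h7 (by positivity)
      nlinarith
  | succ p =>
    have hp1 : (1 : ℝ) ≤ 2 ^ p := one_le_pow₀ (by norm_num)
    have hC4 : (4 : ℝ) ≤ C := by
      have : (2 : ℝ) ^ (p + 1 + 1) = 4 * 2 ^ p := by ring
      rw [this] at hC2
      linarith
    have hx8 : x ≤ 1 / 8 := by
      rw [hx]
      apply one_div_le_one_div_of_le (by norm_num)
      rw [pow_succ]
      nlinarith
    have hc0 := bnsC_nonneg (p + 1)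
    have hc := bnsC_le p
    have hbase : C - 2 ^ (p + 1 + 1) * (1 - bnsC (p + 1)) ≤ C * (1 - 7 / 3 * x) := by
      have e1 : (2 : ℝ) ^ p * (1 / 4) ^ p * 2 ^ p = 1 := by
        rw [← mul_pow, ← mul_pow]
        norm_num
      have e2 : C * x = 2 ^ p * (1 / 4) ^ p / 2 := by
        have h2 : (0 : ℝ) < 2 ^ p := by positivity
        apply mul_right_cancel₀ h2.ne'
        rw [pow_succ] at hxC
        linarith
      have e3 : (2 : ℝ) ^ (p + 1 + 1) * (7 / 24 * (1 / 4) ^ p) ≤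
          2 ^ (p + 1 + 1) * (1 - bnsC (p + 1)) :=
        mul_le_mul_of_nonneg_left (by linarith) (by positivity)
      have e4 : (2 : ℝ) ^ (p + 1 + 1) = 4 * 2 ^ p := by ring
      rw [e4] at e3 ⊢
      nlinarith
    have hbase0 : 0 ≤ C - 2 ^ (p + 1 + 1) * (1 - bnsC (p + 1)) := by
      have : (0 : ℝ) < 2 ^ (p + 1 + 1) := by positivity
      nlinarith
    set y : ℝ := (1 - 7 / 3 * x) ^ n with hy
    have hy0 : 0 ≤ y := pow_nonneg (by linarith) n
    have hβ : (C - 2 ^ (p + 1 + 1) * (1 - bnsC (p + 1))) ^ n ≤ C ^ n * y := by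
      rw [hy, ← mul_pow]
      exact pow_le_pow_left₀ hbase0 hbase n
    have hδ : (C - 2) ^ n ≤ C ^ n * τ ^ 4 := by
      rw [hτ, ← pow_mul, mul_comm n 4, pow_mul, ← mul_pow]
      apply pow_le_pow_left₀ (by linarith)
      have hb : 1 + ((4 : ℕ) : ℝ) * (-x) ≤ (1 + (-x)) ^ 4 := one_add_mul_le_pow (by linarith) 4
      rw [← sub_eq_add_neg] at hb
      push_cast at hb
      have h1 : x * C * 2 ≤ 1 := by
        rw [pow_succ] at hxC
        have : 0 < x * C := by positivity
        nlinarith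
      nlinarith
    have hy3 : y ^ 3 ≤ τ ^ 7 := by
      rw [hy, hτ, pow_right_comm _ n 3, pow_right_comm _ n 7]
      exact pow_le_pow_left₀ (pow_nonneg (by linarith) _) (poly_ineq x hx0.le hx8) n
    have hτ4 : τ ^ 4 ≤ 1 / 16 := by
      have := pow_le_pow_left₀ hτ0.le hbig.le 4
      exact this.trans (by norm_num)
    have hyτ : y ≤ 13 / 32 * τ := by
      apply le_of_pow_le_pow_left₀ (n := 3) (by norm_num) (by positivity)
      have : τ ^ 7 = τ ^ 3 * τ ^ 4 := by ring
      have h3 : 0 < τ ^ 3 := by positivity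
      rw [mul_pow]
      nlinarith
    have hyA : 13 / 96 ≤ y * A := by
      have h1 : C ^ n * (13 / 96) ≤ C ^ n * (y * A) := by
        have h2 := mul_le_mul_of_nonneg_right hβ hA0
        nlinarith
      exact le_of_mul_le_mul_left h1 hCn
    nlinarith
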